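/- (Corollary 6, non-divisibility part) Let n ≥ 2, λ = 1/2, m ∈ {1,…,n}, and L^{(m)} = −(1/16)·(ξ_m∘D − 2E'∘(∂/∂u_m))∘D ∈ W. Then there is no element B ∈ W with L^{(m)} = E'∘B, and there is no element B ∈ W with L^{(m)} = (E'+1)∘B. Consequently, the ℂ-linear map ψ ↦ C^{1/2}_2(ξ_m, ψ) = (E'(E'+1))^{−1}(L^{(m)}ψ) is not an element of W, i.e., it is not a differential operator with polynomial coefficients. -/

import Mathlib

open MvPolynomial

/-- The polynomial symbol algebra `A = ℂ[u₁,…,uₙ,ξ₁,…,ξₙ]`: variables `Sum.inl i` are the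
`uᵢ` and variables `Sum.inr i` are the `ξᵢ`. -/
abbrev PolA (n : ℕ) := MvPolynomial (Fin n ⊕ Fin n) ℂ

namespace LO

/-- ξ-degree of a monomial exponent. -/
def xiDeg {n : ℕ} (d : (Fin n ⊕ Fin n) →₀ ℕ) : ℕ :=
  ∑ i : Fin n, d (Sum.inr i)

/-- `c(E)`: the operator multiplying the ξ-degree-`m` component by `c m`. -/
noncomputable def cE {n : ℕ} (c : ℕ → ℂ) (φ : PolA n) : PolA n :=
  ∑ d ∈ φ.support, monomial d (c (xiDeg d) * coeff d φ)

/-- `D = Σᵢ ∂²/∂uᵢ∂ξᵢ`. -/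
noncomputable def Dop {n : ℕ} (φ : PolA n) : PolA n :=
  ∑ i : Fin n, pderiv (Sum.inl i) (pderiv (Sum.inr i) φ)

/-- The scalar `h^λ_d(m)`. -/
noncomputable def hScal (n : ℕ) (lam : ℂ) (d m : ℕ) : ℂ :=
  (d.factorial : ℂ)⁻¹ *
    ∏ j ∈ Finset.range d,
      ((m : ℂ) + (j : ℂ) + lam * ((n : ℂ) + 1)) /
        (2 * (m : ℂ) + (j : ℂ) + (n : ℂ) + (d : ℂ))

/-- The scalar `g^λ_d(m)`. -/
noncomputable def gScal (n : ℕ) (lam : ℂ) (d m : ℕ) : ℂ :=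
  (d.factorial : ℂ)⁻¹ *
    ∏ j ∈ Finset.range d,
      (-(m : ℂ) - (j : ℂ) - lam * ((n : ℂ) + 1)) /
        (2 * (m : ℂ) + (j : ℂ) + (n : ℂ) + 1)

/-- `bh^λ_d = h^λ_d(E) ∘ D^d` (equal to the identity for `d = 0`). -/
noncomputable def bh {n : ℕ} (lam : ℂ) (d : ℕ) (φ : PolA n) : PolA n :=
  cE (hScal n lam d) (Dop^[d] φ)

/-- `bg^λ_d = g^λ_d(E) ∘ D^d` (equal to the identity for `d = 0`). -/
noncomputable def bg {n : ℕ} (lam : ℂ) (d : ℕ) (φ : PolA n) : PolA n :=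
  cE (gScal n lam d) (Dop^[d] φ)

/-- `N_k(φ,ψ) = (1/k!) Σ_{α ∈ {1,…,n}^k} ∂^kφ/∂ξ_α · ∂^kψ/∂u_α`. -/
noncomputable def Nop {n : ℕ} (k : ℕ) (φ ψ : PolA n) : PolA n :=
  (k.factorial : ℂ)⁻¹ •
    ∑ α : Fin k → Fin n,
      ((List.ofFn α).foldr (fun i acc => pderiv (Sum.inr i) acc) φ) *
      ((List.ofFn α).foldr (fun i acc => pderiv (Sum.inl i) acc) ψ)

/-- The coefficient `C^λ_p` of the Lecomte–Ovsienko star product. -/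
noncomputable def C (n : ℕ) (lam : ℂ) (p : ℕ) (φ ψ : PolA n) : PolA n :=
  ∑ i ∈ Finset.range (p + 1), ∑ j ∈ Finset.range (p + 1),
    ∑ k ∈ Finset.range (p + 1), ∑ m ∈ Finset.range (p + 1),
      if i + j + k + m = p then bg lam m (Nop k (bh lam i φ) (bh lam j ψ)) else 0

/-- The Poisson bracket `{φ,ψ}`. -/
noncomputable def pb {n : ℕ} (φ ψ : PolA n) : PolA n :=
  ∑ i : Fin n,
    (pderiv (Sum.inr i) φ * pderiv (Sum.inl i) ψ
      - pderiv (Sum.inl i) φ * pderiv (Sum.inr i) ψ)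

/-- `φ ∈ A^m` (ξ-homogeneous of degree `m`; for `m < 0` this forces `φ = 0`). -/
def IsXiHomog {n : ℕ} (m : ℤ) (φ : PolA n) : Prop :=
  ∀ d ∈ φ.support, (xiDeg d : ℤ) = m

/-- The set of spanning momentum functions of the projective `sl_{n+1}(ℝ)`-action. -/
noncomputable def momSet (n : ℕ) : Set (PolA n) :=
  (Set.range fun i : Fin n => (X (Sum.inr i) : PolA n)) ∪
  (Set.range fun ij : Fin n × Fin n =>
    (X (Sum.inl ij.1) * X (Sum.inr ij.2) : PolA n)) ∪
  (Set.range fun i : Fin n =>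
    (X (Sum.inl i) * ∑ k : Fin n, X (Sum.inl k) * X (Sum.inr k) : PolA n))

/-- The span `M` of the momentum functions. -/
noncomputable def momSpan (n : ℕ) : Submodule ℂ (PolA n) := Submodule.span ℂ (momSet n)

/-- The Weyl algebra `W` of differential operators with polynomial coefficients,
as a subalgebra of `End_ℂ(A)`. -/
noncomputable def Weyl (n : ℕ) : Subalgebra ℂ (Module.End ℂ (PolA n)) :=
  Algebra.adjoin ℂ
    ((Set.range fun i : Fin n =>
        (LinearMap.mulLeft ℂ (X (Sum.inl i)) : Module.End ℂ (PolA n))) ∪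
     (Set.range fun i : Fin n =>
        (LinearMap.mulLeft ℂ (X (Sum.inr i)) : Module.End ℂ (PolA n))) ∪
     (Set.range fun v : Fin n ⊕ Fin n =>
        ((pderiv v).toLinearMap : Module.End ℂ (PolA n))))

/-- A bilinear map `B : A × A → A` is bidifferential if it is a finite sum
`B(φ,ψ) = Σ_α A_α(φ)·B_α(ψ)` with `A_α, B_α` in the Weyl algebra. -/
def Bidiff (n : ℕ) (B : PolA n → PolA n → PolA n) : Prop :=
  ∃ (N : ℕ) (Aop Bop : Fin N → Weyl n),
    ∀ φ ψ : PolA n,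
      B φ ψ = ∑ α : Fin N,
        (Aop α : Module.End ℂ (PolA n)) φ * (Bop α : Module.End ℂ (PolA n)) ψ

/-- The scalar by which `T_p = ∏_{i=1}^{⌊p/2⌋}(E'+i)` acts on `A^m`. -/
noncomputable def TScal (n p m : ℕ) : ℂ :=
  ∏ i ∈ Finset.Icc 1 (p / 2), ((m : ℂ) + (n : ℂ) / 2 + (i : ℂ))

/-- The scalar by which `S_p = ∏_{i=1}^{⌊p/2⌋}(E'−i)` acts on `A^m`. -/
noncomputable def SScal (n p m : ℕ) : ℂ :=
  ∏ i ∈ Finset.Icc 1 (p / 2), ((m : ℂ) + (n : ℂ) / 2 - (i : ℂ))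

/-- The operator `T_p`. -/
noncomputable def Tp (n p : ℕ) : PolA n → PolA n := cE (TScal n p)

/-- The operator `S_p`. -/
noncomputable def Sp (n p : ℕ) : PolA n → PolA n := cE (SScal n p)

/-- The fiberwise Euler operator `E = Σ ξᵢ ∂/∂ξᵢ` as an endomorphism. -/
noncomputable def Elin (n : ℕ) : Module.End ℂ (PolA n) :=
  ∑ i : Fin n,
    (LinearMap.mulLeft ℂ (X (Sum.inr i)) : Module.End ℂ (PolA n)) ∘ₗ
      (pderiv (Sum.inr i)).toLinearMap

/-- `E' = E + n/2` as an endomorphism. -/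
noncomputable def E'lin (n : ℕ) : Module.End ℂ (PolA n) :=
  Elin n + ((n : ℂ) / 2) • 1

/-- `D` as an endomorphism. -/
noncomputable def Dlin (n : ℕ) : Module.End ℂ (PolA n) :=
  ∑ i : Fin n,
    ((pderiv (Sum.inl i)).toLinearMap : Module.End ℂ (PolA n)) ∘ₗ
      (pderiv (Sum.inr i)).toLinearMap

/-- `L^{(m)} = −(1/16)(ξ_m∘D − 2E'∘∂/∂u_m)∘D`. -/
noncomputable def Lop (n : ℕ) (m : Fin n) : Module.End ℂ (PolA n) :=
  (-(1 / 16 : ℂ)) •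
    (((LinearMap.mulLeft ℂ (X (Sum.inr m)) : Module.End ℂ (PolA n)) ∘ₗ Dlin n
        - (2 : ℂ) • (E'lin n ∘ₗ (pderiv (Sum.inl m)).toLinearMap)) ∘ₗ Dlin n)

end LO

/-!
A product rule shows that every `B ∈ W` is killed by a power of `ad X_v`, since this holds for the
generators. Iterating `ad X_v` amounts to taking forward differences of
`k ↦ coeff (X_v ^ k * X ^ d) (B (X_v ^ k * f))`, so this function is a polynomial `q` in `k`.
For `j ≠ m` the operator `L^{(m)}` sends `ξ_m ^ k * (u_j * ξ_j) ^ 2` to `-(1 / 4) ξ_m ^ (k + 1)`, so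
`L^{(m)} = (E' + c) ∘ B` would make `(k + 1 + n / 2 + c) * q(k)` equal to `-1 / 4` for all `k`,
although this polynomial vanishes at `k = -(1 + n / 2 + c)`. Finally
`E' (E' + 1) C_2^{1/2}(ξ_m, ψ) = L^{(m)} ψ`, so if `C_2^{1/2}(ξ_m, ·)` were in `W`, then `E'`
would divide `L^{(m)}` on the left.
-/

attribute [local instance] LieRing.ofAssociativeRing

section AdNilpotent

variable {R S : Type*} [CommRing R] [Ring S] [Algebra R S]

theorem lie_mul_eq_lie_mul_add_mul_lie (x a b : S) : ⁅x, a * b⁆ = ⁅x, a⁆ * b + a * ⁅x, b⁆ := by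
  simp only [Ring.lie_def]
  noncomm_ring

theorem ad_pow_mul_eq_zero (x : S) {a b : S} {p q : ℕ} (ha : (LieAlgebra.ad R S x ^ p) a = 0)
    (hb : (LieAlgebra.ad R S x ^ q) b = 0) : (LieAlgebra.ad R S x ^ (p + q)) (a * b) = 0 := by
  induction hN : p + q generalizing a b p q with
  | zero =>
    obtain rfl : p = 0 := by lia
    obtain rfl : a = 0 := by simpa using ha
    simp
  | succ N ih =>
    have ad_mul : LieAlgebra.ad R S x (a * b) = ⁅x, a⁆ * b + a * ⁅x, b⁆ :=
      lie_mul_eq_lie_mul_add_mul_lie x a b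
    rw [pow_succ, Module.End.mul_apply, ad_mul, map_add]
    have left_term : (LieAlgebra.ad R S x ^ N) (⁅x, a⁆ * b) = 0 := by
      cases p with
      | zero =>
        obtain rfl : a = 0 := by simpa using ha
        simp
      | succ p => exact ih (by simpa [pow_succ] using ha) hb (by lia)
    have right_term : (LieAlgebra.ad R S x ^ N) (a * ⁅x, b⁆) = 0 := by
      cases q with
      | zero =>
        obtain rfl : b = 0 := by simpa using hb
        simp
      | succ q => exact ih ha (by simpa [pow_succ] using hb) (by lia)
    rw [left_term, right_term, add_zero]

variable (R) in
/-- The subalgebra of elements of an associative algebra killed by a power of `ad x`. Its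
underlying module is the Engel subalgebra of `x`. -/
def adNilpotentSubalgebra (x : S) : Subalgebra R S :=
  (LieSubalgebra.engel R x).toSubmodule.toSubalgebra
    ((LieSubalgebra.mem_engel_iff R x 1).mpr ⟨1, by simp [Ring.lie_def]⟩)
    fun a b ha hb ↦ by
      obtain ⟨p, hp⟩ := (LieSubalgebra.mem_engel_iff R x a).mp ha
      obtain ⟨q, hq⟩ := (LieSubalgebra.mem_engel_iff R x b).mp hb
      exact (LieSubalgebra.mem_engel_iff R x (a * b)).mpr ⟨p + q, ad_pow_mul_eq_zero x hp hq⟩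

theorem mem_adNilpotentSubalgebra {x a : S} :
    a ∈ adNilpotentSubalgebra R x ↔ ∃ N : ℕ, (LieAlgebra.ad R S x ^ N) a = 0 :=
  LieSubalgebra.mem_engel_iff R x a

end AdNilpotent

section Multiplication

variable {R A : Type*} [CommRing R] [CommRing A] [Algebra R A]

theorem mulLeft_lie_mulLeft (f g : A) :
    ⁅LinearMap.mulLeft R f, LinearMap.mulLeft R g⁆ = 0 := by
  ext h
  simp only [Ring.lie_def, LinearMap.sub_apply, Module.End.mul_apply, LinearMap.mulLeft_apply,
    LinearMap.zero_apply]
  ring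

theorem mulLeft_lie_derivation (f : A) (δ : Derivation R A A) :
    ⁅LinearMap.mulLeft R f, (δ : A →ₗ[R] A)⁆ = LinearMap.mulLeft R (-δ f) := by
  ext h
  simp only [Ring.lie_def, LinearMap.sub_apply, Module.End.mul_apply, LinearMap.mulLeft_apply,
    Derivation.coeFn_coe, Derivation.leibniz, smul_eq_mul]
  ring

theorem mulLeft_mem_adNilpotentSubalgebra (f g : A) :
    LinearMap.mulLeft R g ∈ adNilpotentSubalgebra R (LinearMap.mulLeft R f) :=
  mem_adNilpotentSubalgebra.mpr ⟨1, by
    rw [pow_one, LieAlgebra.ad_apply, mulLeft_lie_mulLeft]⟩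

theorem derivation_mem_adNilpotentSubalgebra (f : A) (δ : Derivation R A A) :
    (δ : A →ₗ[R] A) ∈ adNilpotentSubalgebra R (LinearMap.mulLeft R f) :=
  mem_adNilpotentSubalgebra.mpr ⟨2, by
    rw [sq, Module.End.mul_apply, LieAlgebra.ad_apply, LieAlgebra.ad_apply,
      mulLeft_lie_derivation, mulLeft_lie_mulLeft]⟩

end Multiplication

section PolynomialSequences

open fwdDiff

variable {K R M : Type*}

theorem exists_polynomial_of_fwdDiff_iter_eq_zero [Field K] [CharZero K]
    {f : ℕ → K} {N : ℕ} (hf : (Δ_[1])^[N] f = 0) :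
    ∃ q : Polynomial K, ∀ k : ℕ, f k = q.eval (k : K) := by
  refine ⟨∑ i ∈ Finset.range N,
    Polynomial.C ((Δ_[1])^[i] f 0 / i.factorial) * descPochhammer K i, fun k ↦ ?_⟩
  have vanish (i : ℕ) (hi : N ≤ i) : (Δ_[1])^[i] f = 0 := by
    obtain ⟨j, rfl⟩ := Nat.exists_eq_add_of_le' hi
    rw [Function.iterate_add_apply, hf]
    exact Function.iterate_fixed (fwdDiff_const 1 0) j
  calc f k = ∑ i ∈ Finset.range (k + 1), k.choose i • (Δ_[1])^[i] f 0 := by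
        simpa using shift_eq_sum_fwdDiff_iter 1 f k 0
    _ = ∑ i ∈ Finset.range (max N (k + 1)), k.choose i • (Δ_[1])^[i] f 0 := by
        refine Finset.sum_subset (Finset.range_mono (le_max_right _ _)) fun i _ hi ↦ ?_
        rw [Nat.choose_eq_zero_of_lt (by simpa using hi), zero_smul]
    _ = ∑ i ∈ Finset.range N, k.choose i • (Δ_[1])^[i] f 0 := by
        refine (Finset.sum_subset (Finset.range_mono (le_max_left _ _)) fun i _ hi ↦ ?_).symm
        rw [vanish i (by simpa using hi), Pi.zero_apply, smul_zero]
    _ = _ := by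
        simp only [Polynomial.eval_finsetSum, Polynomial.eval_mul, Polynomial.eval_C,
          nsmul_eq_mul, Nat.cast_choose_eq_descPochhammer_div]
        exact Finset.sum_congr rfl fun i _ ↦ by ring

theorem eval_mul_ne_const_of_isRoot [CommRing R] [IsDomain R] [CharZero R]
    {p q : Polynomial R} {z c : R} (hz : p.IsRoot z) (hc : c ≠ 0) :
    ¬ ∀ k : ℕ, p.eval (k : R) * q.eval (k : R) = c := by
  intro h
  have mul_eq : p * q = Polynomial.C c :=
    Polynomial.eq_of_infinite_eval_eq _ _ <|
      (Set.infinite_range_of_injective (Nat.cast_injective (R := R))).mono <| by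
        rintro _ ⟨k, rfl⟩
        simpa using h k
  apply hc
  simpa [hz.eq_zero] using (congrArg (Polynomial.eval z) mul_eq).symm

theorem fwdDiff_iter_matrixCoeff_eq_zero [CommRing R] [AddCommGroup M] [Module R M]
    {x : Module.End R M} {ℓ : ℕ → M →ₗ[R] R}
    (hℓ : ∀ k w, ℓ (k + 1) (x w) = ℓ k w) (v : M) {N : ℕ}
    {B : Module.End R M} (hB : (LieAlgebra.ad R (Module.End R M) x ^ N) B = 0) :
    (Δ_[1])^[N] (fun k ↦ ℓ k (B ((x ^ k) v))) = 0 := by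
  induction N generalizing ℓ B with
  | zero =>
    obtain rfl : B = 0 := by simpa using hB
    ext k
    simp
  | succ N ih =>
    have difference : Δ_[1] (fun k ↦ ℓ k (B ((x ^ k) v)))
        = fun k ↦ ℓ (k + 1) ((-⁅x, B⁆) ((x ^ k) v)) := by
      ext k
      rw [fwdDiff, ← hℓ k]
      simp [Ring.lie_def, pow_succ']
    rw [Function.iterate_succ_apply, difference]
    refine ih (fun k ↦ hℓ (k + 1)) ?_
    rwa [map_neg, neg_eq_zero, ← LieAlgebra.ad_apply (R := R), ← Module.End.mul_apply, ← pow_succ]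

theorem exists_polynomial_matrixCoeff [Field K] [CharZero K] [AddCommGroup M] [Module K M]
    {x : Module.End K M} {ℓ : ℕ → M →ₗ[K] K}
    (hℓ : ∀ k w, ℓ (k + 1) (x w) = ℓ k w) (v : M) {B : Module.End K M}
    (hB : B ∈ adNilpotentSubalgebra K x) :
    ∃ q : Polynomial K, ∀ k : ℕ, ℓ k (B ((x ^ k) v)) = q.eval (k : K) :=
  let ⟨_, hN⟩ := mem_adNilpotentSubalgebra.mp hB
  exists_polynomial_of_fwdDiff_iter_eq_zero (fwdDiff_iter_matrixCoeff_eq_zero hℓ v hN)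

end PolynomialSequences

section MvPolynomial

variable {σ R : Type*}

theorem coeff_X_mul_pderiv [CommSemiring R] (v : σ) (d : σ →₀ ℕ) (f : MvPolynomial σ R) :
    coeff d (X v * pderiv v f) = d v * coeff d f := by
  classical
  rw [coeff_X_mul', coeff_pderiv]
  split_ifs with hv
  · have hle : Finsupp.single v 1 ≤ d := by
      simpa [Nat.one_le_iff_ne_zero] using hv
    have hcast : ((d v - 1 : ℕ) : R) + 1 = d v := by
      exact_mod_cast congrArg Nat.cast (Nat.sub_add_cancel (by simpa using hle))
    simp [tsub_add_cancel_of_le hle, hcast, mul_comm]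
  · simp [Finsupp.notMem_support_iff.mp hv]

theorem pderiv_pderiv_comm [CommRing R] (v w : σ) (f : MvPolynomial σ R) :
    pderiv v (pderiv w f) = pderiv w (pderiv v f) := by
  classical
  have commute : ⁅(pderiv v : Derivation R (MvPolynomial σ R) (MvPolynomial σ R)),
      (pderiv w : Derivation R (MvPolynomial σ R) (MvPolynomial σ R))⁆ = 0 :=
    derivation_ext fun i ↦ by
      simp [Derivation.commutator_apply, pderiv_X, Pi.single_apply, apply_ite]
  simpa [Derivation.commutator_apply, sub_eq_zero] using DFunLike.congr_fun commute f

end MvPolynomial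

namespace LO

variable {n : ℕ}

theorem Weyl_le_adNilpotentSubalgebra (f : PolA n) :
    Weyl n ≤ adNilpotentSubalgebra ℂ (LinearMap.mulLeft ℂ f) := by
  refine Algebra.adjoin_le ?_
  rintro _ ((⟨i, rfl⟩ | ⟨i, rfl⟩) | ⟨v, rfl⟩)
  · exact mulLeft_mem_adNilpotentSubalgebra f _
  · exact mulLeft_mem_adNilpotentSubalgebra f _
  · exact derivation_mem_adNilpotentSubalgebra f _

theorem exists_polynomial_coeff_of_mem_Weyl {B : Module.End ℂ (PolA n)} (hB : B ∈ Weyl n)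
    (v : Fin n ⊕ Fin n) (d : (Fin n ⊕ Fin n) →₀ ℕ) (f : PolA n) :
    ∃ q : Polynomial ℂ, ∀ k : ℕ,
      coeff (Finsupp.single v k + d) (B (X v ^ k * f)) = q.eval (k : ℂ) := by
  have shift (k : ℕ) (g : PolA n) :
      coeff (Finsupp.single v (k + 1) + d) (X v * g) = coeff (Finsupp.single v k + d) g := by
    rw [add_comm k 1, Finsupp.single_add, add_assoc]
    exact coeff_X_mul _ v g
  simpa [lcoeff] using
    exists_polynomial_matrixCoeff (ℓ := fun k ↦ lcoeff ℂ (Finsupp.single v k + d)) shift f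
      (Weyl_le_adNilpotentSubalgebra (X v) hB)

theorem mulLeft_X_mem_Weyl (v : Fin n ⊕ Fin n) : LinearMap.mulLeft ℂ (X v) ∈ Weyl n := by
  refine Algebra.subset_adjoin (Or.inl ?_)
  rcases v with i | i
  · exact Or.inl ⟨i, rfl⟩
  · exact Or.inr ⟨i, rfl⟩

theorem pderiv_mem_Weyl (v : Fin n ⊕ Fin n) : (pderiv v).toLinearMap ∈ Weyl n :=
  Algebra.subset_adjoin (Or.inr ⟨v, rfl⟩)

theorem E'lin_mem_Weyl : E'lin n ∈ Weyl n :=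
  add_mem (sum_mem fun _ _ ↦ mul_mem (mulLeft_X_mem_Weyl _) (pderiv_mem_Weyl _))
    ((Weyl n).smul_mem (one_mem _) _)

theorem coeff_E'lin (d : (Fin n ⊕ Fin n) →₀ ℕ) (φ : PolA n) :
    coeff d (E'lin n φ) = (xiDeg d + n / 2) * coeff d φ := by
  simp [E'lin, Elin, xiDeg, coeff_sum, coeff_X_mul_pderiv, add_mul, Finset.sum_mul]

theorem coeff_E'lin_add_smul (c : ℂ) (d : (Fin n ⊕ Fin n) →₀ ℕ) (φ : PolA n) :
    coeff d ((E'lin n + c • 1) φ) = (xiDeg d + n / 2 + c) * coeff d φ := by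
  rw [LinearMap.add_apply, LinearMap.smul_apply, Module.End.one_apply, coeff_add, coeff_E'lin,
    coeff_smul, smul_eq_mul, ← add_mul]

theorem coeff_cE (c : ℕ → ℂ) (d : (Fin n ⊕ Fin n) →₀ ℕ) (φ : PolA n) :
    coeff d (cE c φ) = c (xiDeg d) * coeff d φ := by
  classical
  simp +contextual [cE, coeff_sum, coeff_monomial, Finset.sum_ite_eq']

theorem cE_const (a : ℂ) (φ : PolA n) : cE (fun _ ↦ a) φ = a • φ := by
  ext d
  rw [coeff_cE, coeff_smul, smul_eq_mul]

theorem cE_zero (c : ℕ → ℂ) : cE c (0 : PolA n) = 0 := by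
  ext d
  simp [coeff_cE]

theorem xiDeg_add (d e : (Fin n ⊕ Fin n) →₀ ℕ) : xiDeg (d + e) = xiDeg d + xiDeg e := by
  simp [xiDeg, Finset.sum_add_distrib]

theorem xiDeg_single_inr (m : Fin n) (k : ℕ) : xiDeg (Finsupp.single (Sum.inr m) k) = k := by
  simp [xiDeg, Finsupp.single_apply]

theorem X_mul_cE_succ (c : ℕ → ℂ) (m : Fin n) (φ : PolA n) :
    X (Sum.inr m) * cE (fun k ↦ c (k + 1)) φ = cE c (X (Sum.inr m) * φ) := by
  classical
  ext d
  rw [coeff_cE, coeff_X_mul', coeff_X_mul', coeff_cE]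
  split_ifs with hm
  · have hle : Finsupp.single (Sum.inr m) 1 ≤ d := by
      simpa [Nat.one_le_iff_ne_zero] using hm
    have xiDeg_eq : xiDeg (d - Finsupp.single (Sum.inr m) 1) + 1 = xiDeg d := by
      conv_rhs => rw [← tsub_add_cancel_of_le hle, xiDeg_add, xiDeg_single_inr]
    rw [xiDeg_eq]
  · rw [mul_zero]

theorem Dlin_apply (φ : PolA n) : Dlin n φ = Dop φ := by
  simp [Dlin, Dop]

theorem Dlin_pderiv_comm (v : Fin n ⊕ Fin n) (φ : PolA n) :
    Dlin n (pderiv v φ) = pderiv v (Dlin n φ) := by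
  simp [Dlin, pderiv_pderiv_comm v]

theorem Dlin_X_mul (m : Fin n) (φ : PolA n) :
    Dlin n (X (Sum.inr m) * φ) = X (Sum.inr m) * Dlin n φ + pderiv (Sum.inl m) φ := by
  have term (i : Fin n) : pderiv (Sum.inl i) (pderiv (Sum.inr i) (X (Sum.inr m) * φ))
      = X (Sum.inr m) * pderiv (Sum.inl i) (pderiv (Sum.inr i) φ)
        + if m = i then pderiv (Sum.inl i) φ else 0 := by
    by_cases h : m = i <;> simp [Derivation.leibniz, pderiv_X, h]
  simp only [Dlin, LinearMap.sum_apply, LinearMap.comp_apply, Derivation.coeFn_coe, term,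
    Finset.sum_add_distrib, Finset.mul_sum, Finset.sum_ite_eq, Finset.mem_univ, if_true]

theorem Dlin_X_pow_mul {m : Fin n} {φ : PolA n} (hφ : pderiv (Sum.inl m) φ = 0) (k : ℕ) :
    Dlin n (X (Sum.inr m) ^ k * φ) = X (Sum.inr m) ^ k * Dlin n φ := by
  induction k with
  | zero => simp
  | succ k ih =>
    rw [pow_succ', mul_assoc, Dlin_X_mul, ih]
    simp [hφ, mul_assoc]

theorem Lop_apply (m : Fin n) (φ : PolA n) :
    Lop n m φ = -(1 / 16 : ℂ) • (X (Sum.inr m) * Dlin n (Dlin n φ)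
      - (2 : ℂ) • E'lin n (pderiv (Sum.inl m) (Dlin n φ))) :=
  rfl

theorem Lop_X_pow_mul {m : Fin n} {φ : PolA n} (hφ : pderiv (Sum.inl m) φ = 0) (k : ℕ) :
    Lop n m (X (Sum.inr m) ^ k * φ)
      = -(1 / 16 : ℂ) • (X (Sum.inr m) ^ (k + 1) * Dlin n (Dlin n φ)) := by
  have hDφ : pderiv (Sum.inl m) (Dlin n φ) = 0 := by rw [← Dlin_pderiv_comm, hφ, map_zero]
  rw [Lop_apply, Dlin_X_pow_mul hφ, Dlin_X_pow_mul hDφ]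
  simp [hDφ, pow_succ', mul_assoc]

theorem Dlin_X_pow_mul_X_pow (j : Fin n) (a b : ℕ) :
    Dlin n (X (Sum.inl j) ^ (a + 1) * X (Sum.inr j) ^ (b + 1))
      = ((a + 1) * (b + 1) : ℂ) • (X (Sum.inl j) ^ a * X (Sum.inr j) ^ b) := by
  have term (i : Fin n) : pderiv (Sum.inl i) (pderiv (Sum.inr i)
      (X (Sum.inl j) ^ (a + 1) * X (Sum.inr j) ^ (b + 1) : PolA n))
      = if j = i then ((a + 1) * (b + 1) : ℂ) • (X (Sum.inl j) ^ a * X (Sum.inr j) ^ b)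
        else 0 := by
    by_cases h : j = i
    · subst h
      simp only [Derivation.leibniz, Derivation.leibniz_pow, add_tsub_cancel_right, pderiv_X,
        Pi.single_eq_same, smul_eq_mul, mul_one, nsmul_eq_mul, Nat.cast_add, Nat.cast_one, ne_eq,
        reduceCtorEq, not_false_eq_true, Pi.single_eq_of_ne, mul_zero, add_zero,
        map_add, Derivation.map_natCast, Derivation.map_one_eq_zero, zero_add, ↓reduceIte,
        smul_eq_C_mul, C_mul, map_natCast, C_1]
      ring
    · simp [Derivation.leibniz, Derivation.leibniz_pow, pderiv_X, h]
  simp only [Dlin, LinearMap.sum_apply, LinearMap.comp_apply, Derivation.coeFn_coe, term,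
    Finset.sum_ite_eq, Finset.mem_univ, if_true]

theorem Dlin_Dlin_sq_mul_sq (j : Fin n) :
    Dlin n (Dlin n (X (Sum.inl j) ^ 2 * X (Sum.inr j) ^ 2)) = MvPolynomial.C 4 := by
  rw [Dlin_X_pow_mul_X_pow, map_smul, Dlin_X_pow_mul_X_pow j 0 0]
  simp only [smul_eq_C_mul, pow_zero, mul_one, ← map_mul]
  norm_num

theorem Lop_X_pow_mul_sq_mul_sq {m j : Fin n} (hj : j ≠ m) (k : ℕ) :
    Lop n m (X (Sum.inr m) ^ k * (X (Sum.inl j) ^ 2 * X (Sum.inr j) ^ 2))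
      = -(1 / 4 : ℂ) • X (Sum.inr m) ^ (k + 1) := by
  have pderiv_eq_zero :
      pderiv (Sum.inl m) (X (Sum.inl j) ^ 2 * X (Sum.inr j) ^ 2 : PolA n) = 0 := by
    simp [Derivation.leibniz, Derivation.leibniz_pow, pderiv_X, hj]
  rw [Lop_X_pow_mul pderiv_eq_zero, Dlin_Dlin_sq_mul_sq, mul_comm, ← smul_eq_C_mul, smul_smul]
  norm_num

theorem not_exists_Lop_eq_E'lin_add_smul_comp (hn : 2 ≤ n) (m : Fin n) (c : ℂ) :
    ¬ ∃ B ∈ Weyl n, Lop n m = (E'lin n + c • 1) ∘ₗ B := by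
  rintro ⟨B, hB, hL⟩
  have : Nontrivial (Fin n) := Fin.nontrivial_iff_two_le.mpr hn
  obtain ⟨j, hj⟩ := exists_ne m
  set φ : PolA n := X (Sum.inl j) ^ 2 * X (Sum.inr j) ^ 2
  obtain ⟨q, hq⟩ := exists_polynomial_coeff_of_mem_Weyl hB (Sum.inr m)
    (Finsupp.single (Sum.inr m) 1) φ
  have root : (Polynomial.X - Polynomial.C (-(1 + n / 2 + c))).IsRoot (-(1 + n / 2 + c)) :=
    Polynomial.root_X_sub_C.mpr rfl
  refine eval_mul_ne_const_of_isRoot (q := q) (c := -(1 / 4)) root (by norm_num) fun k ↦ ?_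
  calc (Polynomial.X - Polynomial.C (-(1 + n / 2 + c))).eval (k : ℂ) * q.eval (k : ℂ)
      = coeff (Finsupp.single (Sum.inr m) k + Finsupp.single (Sum.inr m) 1)
          ((E'lin n + c • 1) (B (X (Sum.inr m) ^ k * φ))) := by
        rw [coeff_E'lin_add_smul, hq, xiDeg_add, xiDeg_single_inr, xiDeg_single_inr,
          Polynomial.eval_sub, Polynomial.eval_X, Polynomial.eval_C]
        push_cast
        ring
    _ = coeff (Finsupp.single (Sum.inr m) (k + 1)) (-(1 / 4 : ℂ) • X (Sum.inr m) ^ (k + 1)) := by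
        rw [← LinearMap.comp_apply, ← hL, Lop_X_pow_mul_sq_mul_sq hj, Finsupp.single_add]
    _ = -(1 / 4) := by simp [X_pow_eq_monomial]

theorem bh_zero (lam : ℂ) (φ : PolA n) : bh lam 0 φ = φ := by
  ext d
  simp [bh, coeff_cE, hScal]

theorem bg_zero (lam : ℂ) (φ : PolA n) : bg lam 0 φ = φ := by
  ext d
  simp [bg, coeff_cE, gScal]

theorem bg_zero_right (lam : ℂ) (d : ℕ) : bg lam d (0 : PolA n) = 0 := by
  rw [bg, Function.iterate_fixed (by simp [Dop]), cE_zero]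

theorem bh_X (lam : ℂ) {d : ℕ} (hd : d ≠ 0) (m : Fin n) :
    bh lam d (X (Sum.inr m) : PolA n) = 0 := by
  obtain ⟨d, rfl⟩ := Nat.exists_eq_succ_of_ne_zero hd
  have Dop_X : Dop (X (Sum.inr m) : PolA n) = 0 := by
    simp [Dop, pderiv_X, Pi.single_apply, apply_ite]
  rw [bh, Function.iterate_succ_apply, Dop_X, Function.iterate_fixed (by simp [Dop]), cE_zero]

theorem Nop_zero (φ ψ : PolA n) : Nop 0 φ ψ = φ * ψ := by
  simp [Nop]

theorem Nop_one (φ ψ : PolA n) :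
    Nop 1 φ ψ = ∑ i, pderiv (Sum.inr i) φ * pderiv (Sum.inl i) ψ := by
  simp [Nop, ← (Equiv.funUnique (Fin 1) (Fin n)).symm.sum_comp]

theorem Nop_two_X (m : Fin n) (ψ : PolA n) : Nop 2 (X (Sum.inr m)) ψ = 0 := by
  simp [Nop, List.ofFn_succ, pderiv_X, Pi.single_apply, apply_ite]

theorem C_two_X (lam : ℂ) (m : Fin n) (ψ : PolA n) :
    C n lam 2 (X (Sum.inr m)) ψ = bg lam 2 (X (Sum.inr m) * ψ) + bg lam 1 (pderiv (Sum.inl m) ψ)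
      + bg lam 1 (X (Sum.inr m) * bh lam 1 ψ) + pderiv (Sum.inl m) (bh lam 1 ψ)
      + X (Sum.inr m) * bh lam 2 ψ := by
  simp [C, Finset.sum_range_succ, bh_X, bh_zero, bg_zero, bg_zero_right, Nop_zero, Nop_one,
    Nop_two_X, pderiv_X, Pi.single_apply, add_assoc]

theorem hScal_half_one (k : ℕ) : hScal n (1 / 2) 1 k = 1 / 2 :=
  calc hScal n (1 / 2) 1 k = (k + 1 / 2 * (n + 1)) / (2 * k + n + 1) := by simp [hScal]
    _ = 1 / 2 := by
      rw [div_eq_iff (by norm_cast)]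
      ring

theorem gScal_half_one (k : ℕ) : gScal n (1 / 2) 1 k = -(1 / 2) :=
  calc gScal n (1 / 2) 1 k = (-k - 1 / 2 * (n + 1)) / (2 * k + n + 1) := by simp [gScal]
    _ = -(1 / 2) := by
      rw [div_eq_iff (by norm_cast)]
      ring

-- Written in terms of `k + 1`, which is the shape in which `X_mul_cE_succ` moves `ξ_m` past `c(E)`.
theorem hScal_half_two (k : ℕ) :
    hScal n (1 / 2) 2 k = (2 * (k + 1 : ℕ) + n - 1) / (8 * (2 * (k + 1 : ℕ) + n)) :=
  calc hScal n (1 / 2) 2 k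
      = (k + 1 / 2 * (n + 1)) * (k + 1 + 1 / 2 * (n + 1))
          / (2 * ((2 * k + n + 2) * (2 * k + 1 + n + 2))) := by
        simp only [hScal, Nat.factorial_two, Nat.cast_ofNat, div_eq_mul_inv, one_mul,
          Finset.prod_range_succ, Finset.range_one, Finset.prod_singleton, CharP.cast_eq_zero,
          add_zero, Nat.cast_one, mul_inv_rev]
        ring
    _ = (2 * (k + 1 : ℕ) + n - 1) / (8 * (2 * (k + 1 : ℕ) + n)) := by
        rw [div_eq_div_iff (by norm_cast) (by norm_cast; lia)]
        push_cast
        ring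

theorem gScal_half_two (k : ℕ) :
    gScal n (1 / 2) 2 k = (2 * k + n + 3) / (8 * (2 * k + n + 2)) :=
  calc gScal n (1 / 2) 2 k
      = (-k - 1 / 2 * (n + 1)) * (-k - 1 - 1 / 2 * (n + 1))
          / (2 * ((2 * k + n + 1) * (2 * k + 1 + n + 1))) := by
        simp only [gScal, Nat.factorial_two, Nat.cast_ofNat, div_eq_mul_inv, one_mul,
          Finset.prod_range_succ, Finset.range_one, Finset.prod_singleton, CharP.cast_eq_zero,
          sub_zero, add_zero, Nat.cast_one, mul_inv_rev]
        ring
    _ = (2 * k + n + 3) / (8 * (2 * k + n + 2)) := by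
        rw [div_eq_div_iff (by norm_cast) (by norm_cast)]
        ring

theorem bh_half_one (φ : PolA n) : bh (1 / 2) 1 φ = (1 / 2 : ℂ) • Dlin n φ := by
  simp only [bh, Function.iterate_one, funext hScal_half_one, cE_const, Dlin_apply]

theorem bg_half_one (φ : PolA n) : bg (1 / 2) 1 φ = (-(1 / 2) : ℂ) • Dlin n φ := by
  simp only [bg, Function.iterate_one, funext gScal_half_one, cE_const, Dlin_apply]

theorem C_half_two_X (m : Fin n) (ψ : PolA n) :
    C n (1 / 2) 2 (X (Sum.inr m)) ψ
      = cE (fun k ↦ (2 * k + n + 3) / (8 * (2 * k + n + 2))) (X (Sum.inr m) * Dlin n (Dlin n ψ)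
          + (2 : ℂ) • pderiv (Sum.inl m) (Dlin n ψ))
        - (1 / 4 : ℂ) • (X (Sum.inr m) * Dlin n (Dlin n ψ) + pderiv (Sum.inl m) (Dlin n ψ))
        + cE (fun k ↦ (2 * k + n - 1) / (8 * (2 * k + n))) (X (Sum.inr m) * Dlin n (Dlin n ψ)) := by
  have bh_two : bh (1 / 2) 2 ψ
      = cE (fun k ↦ (2 * (k + 1 : ℕ) + n - 1) / (8 * (2 * (k + 1 : ℕ) + n)))
        (Dlin n (Dlin n ψ)) := by
    simp only [bh, funext hScal_half_two, Function.iterate_succ_apply, Function.iterate_zero_apply,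
      Dlin_apply]
  have bg_two : bg (1 / 2) 2 (X (Sum.inr m) * ψ)
      = cE (fun k ↦ (2 * k + n + 3) / (8 * (2 * k + n + 2)))
        (X (Sum.inr m) * Dlin n (Dlin n ψ) + (2 : ℂ) • pderiv (Sum.inl m) (Dlin n ψ)) := by
    simp only [bg, funext gScal_half_two, Function.iterate_succ_apply, Function.iterate_zero_apply,
      ← Dlin_apply, Dlin_X_mul, map_add, Dlin_pderiv_comm, two_smul, add_assoc]
  rw [C_two_X, bg_two, bg_half_one, bg_half_one, bh_half_one, bh_two,
    X_mul_cE_succ (fun k ↦ (2 * k + n - 1) / (8 * (2 * k + n)))]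
  simp only [Dlin_pderiv_comm, Dlin_X_mul, map_smul, mul_smul_comm, Derivation.map_smul]
  module

theorem E'lin_E'lin_add_one_C_half_two_X (m : Fin n) (ψ : PolA n) :
    E'lin n ((E'lin n + 1) (C n (1 / 2) 2 (X (Sum.inr m)) ψ)) = Lop n m ψ := by
  rw [C_half_two_X, Lop_apply]
  generalize X (Sum.inr m) * Dlin n (Dlin n ψ) = G
  generalize pderiv (Sum.inl m) (Dlin n ψ) = H
  ext d
  set y : ℂ := 2 * xiDeg d + n with y_def
  have hy : y ≠ 0 := by
    rw [y_def]
    have := m.pos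
    norm_cast
    lia
  have hy_add_two : y + 2 ≠ 0 := by
    rw [y_def]
    norm_cast
  have half_y : xiDeg d + n / 2 = y / 2 := by
    rw [y_def]
    ring
  simp only [LinearMap.add_apply, Module.End.one_apply, coeff_add, coeff_sub, coeff_smul,
    smul_eq_mul, coeff_E'lin, coeff_cE, half_y, ← y_def]
  field_simp
  ring

end LO

/-- Corollary 6, non-divisibility: for `n ≥ 2`, neither `E'` nor
`E' + 1` left divides `L^{(m)}` in the Weyl algebra, and `ψ ↦ C^{1/2}_2(ξ_m,ψ)` is
not a differential operator with polynomial coefficients. -/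
theorem stmt_16 (n : ℕ) (hn : 2 ≤ n) (m : Fin n) :
    (¬ ∃ B ∈ LO.Weyl n, LO.Lop n m = LO.E'lin n ∘ₗ B) ∧
    (¬ ∃ B ∈ LO.Weyl n, LO.Lop n m = (LO.E'lin n + 1) ∘ₗ B) ∧
    (¬ ∃ B ∈ LO.Weyl n, ∀ ψ : PolA n, LO.C n (1 / 2) 2 (X (Sum.inr m)) ψ = B ψ) := by
  have not_divisible := LO.not_exists_Lop_eq_E'lin_add_smul_comp hn m
  have not_E' : ¬ ∃ B ∈ LO.Weyl n, LO.Lop n m = LO.E'lin n ∘ₗ B := by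
    simpa using not_divisible 0
  have not_E'_add_one : ¬ ∃ B ∈ LO.Weyl n, LO.Lop n m = (LO.E'lin n + 1) ∘ₗ B := by
    simpa using not_divisible 1
  refine ⟨not_E', not_E'_add_one, ?_⟩
  rintro ⟨B, hB, hC⟩
  refine not_E' ⟨(LO.E'lin n + 1) ∘ₗ B,
    mul_mem (add_mem LO.E'lin_mem_Weyl (one_mem _)) hB, LinearMap.ext fun ψ ↦ ?_⟩
  rw [LinearMap.comp_apply, LinearMap.comp_apply, ← hC, LO.E'lin_E'lin_add_one_C_half_two_X]
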